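/- For every integer k ≥ 3: (i) m(k) ≤ 1 + m(k−1), and (ii) for every divisor d of k with 1 < d < k, m(k) ≤ m(d) + m(k/d). Hence m(k) ≤ min{1 + m(k−1), min over proper nontrivial divisors d of k of m(d) + m(k/d)}. -/

import Mathlib

/-- `minPoints k` is the least number of points on which there exists a topology
with exactly `k` open sets. -/
noncomputable def minPoints (k : ℕ) : ℕ :=
  sInf {n : ℕ | ∃ t : TopologicalSpace (Fin n), Nat.card {s : Set (Fin n) // t.IsOpen s} = k}

/-!
Adjoining to a space a point whose only neighbourhood is the whole space adds exactly one open set,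
and the number of open sets of a disjoint union is the product of those of its summands. Applied to
spaces with the least possible number of points, these two constructions give the two bounds. Such
spaces exist because iterating the first construction from the empty space realizes every positive
number of open sets, so the infimum defining `minPoints` is attained.
-/

open TopologicalSpace

section OpenExtension

variable {α : Type*} [TopologicalSpace α]

variable (α) in
/-- The open extension of the topology of `α` by the point `none`: its open sets are the whole space
and the open sets of `α`. A set is open for a supremum of topologies when it is open for both; here
one asks that its trace on `α` be open, the other that it be the whole space if it contains
`none`. -/
abbrev openExtension : TopologicalSpace (Option α) :=
  .coinduced some ‹_› ⊔ nhdsAdjoint none ⊤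

attribute [local instance] openExtension

lemma isOpen_openExtension_iff {s : Set (Option α)} :
    IsOpen s ↔ IsOpen (some ⁻¹' s) ∧ (none ∈ s → s = Set.univ) :=
  and_congr_right' (imp_congr_right fun _ ↦ Filter.mem_top)

lemma isOpenMap_some_openExtension : IsOpenMap (some : α → Option α) := fun u hu ↦ by
  rw [isOpen_openExtension_iff, Set.preimage_image_eq _ (Option.some_injective α)]
  exact ⟨hu, by simp⟩

lemma continuous_some_openExtension : Continuous (some : α → Option α) :=
  ⟨fun _ hs ↦ (isOpen_openExtension_iff.1 hs).1⟩

lemma none_mem_opens_openExtension_iff {V : Opens (Option α)} : none ∈ V ↔ V = ⊤ :=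
  ⟨fun h ↦ Opens.ext ((isOpen_openExtension_iff.1 V.isOpen).2 h), fun h ↦ h ▸ trivial⟩

open Classical in
/-- The open sets of the open extension are those of `α` together with the whole space, which
plays the role of the added `⊤`. -/
noncomputable def opensOpenExtensionEquiv : Opens (Option α) ≃ WithTop (Opens α) where
  toFun V := if none ∈ V then ⊤ else ↑(Opens.comap ⟨some, continuous_some_openExtension⟩ V)
  invFun U := U.recTopCoe ⊤ fun U ↦ ⟨some '' U, isOpenMap_some_openExtension _ U.isOpen⟩
  left_inv V := by
    by_cases h : none ∈ V
    · simp [none_mem_opens_openExtension_iff.1 h]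
    · ext (_ | x) <;> simp [h]
  right_inv U := by
    induction U with
    | top => simp
    | coe U =>
      exact (if_neg (by simp)).trans
        (congrArg _ (Opens.ext (Set.preimage_image_eq _ (Option.some_injective α))))

lemma natCard_opens_openExtension [Finite (Opens α)] :
    Nat.card (Opens (Option α)) = Nat.card (Opens α) + 1 :=
  (Nat.card_congr opensOpenExtensionEquiv).trans Finite.card_option

end OpenExtension

section Sum

variable {α β : Type*} [TopologicalSpace α] [TopologicalSpace β]

/-- An open set of a disjoint union is a pair of open sets, its traces on the two summands. -/
def opensSumEquiv : Opens (α ⊕ β) ≃ Opens α × Opens β where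
  toFun W := (Opens.comap ⟨.inl, continuous_inl⟩ W, Opens.comap ⟨.inr, continuous_inr⟩ W)
  invFun P := ⟨.inl '' P.1 ∪ .inr '' P.2,
    (isOpenMap_inl _ P.1.isOpen).union (isOpenMap_inr _ P.2.isOpen)⟩
  left_inv W := by
    ext (x | y) <;> simp
  right_inv P := by
    ext <;> simp

lemma natCard_opens_sum :
    Nat.card (Opens (α ⊕ β)) = Nat.card (Opens α) * Nat.card (Opens β) :=
  (Nat.card_congr opensSumEquiv).trans (Nat.card_prod _ _)

end Sum

section MinPoints

lemma natCard_subtype_isOpen (α : Type*) [t : TopologicalSpace α] :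
    Nat.card {s : Set α // t.IsOpen s} = Nat.card (Opens α) :=
  Nat.card_congr ⟨fun s ↦ ⟨s.1, s.2⟩, fun U ↦ ⟨U, U.isOpen⟩, fun _ ↦ rfl, fun _ ↦ rfl⟩

lemma exists_topologicalSpace_fin_natCard_opens_eq (α : Type*) [TopologicalSpace α] [Finite α] :
    ∃ _ : TopologicalSpace (Fin (Nat.card α)),
      Nat.card (Opens (Fin (Nat.card α))) = Nat.card (Opens α) :=
  let e := (Finite.equivFin α).symm
  let t : TopologicalSpace (Fin (Nat.card α)) := .induced e ‹_›
  ⟨t, Nat.card_congr (e.toHomeomorphOfIsInducing ⟨rfl⟩).opensCongr.toEquiv⟩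

lemma exists_finite_natCard_opens_eq {k : ℕ} (hk : k ≠ 0) :
    ∃ (α : Type) (_ : TopologicalSpace α), Finite α ∧ Nat.card (Opens α) = k := by
  induction k, hk.bot_lt using Nat.le_induction with
  | base => exact ⟨Empty, inferInstance, inferInstance, Nat.card_unique⟩
  | succ k hpos ih =>
    obtain ⟨α, _, _, rfl⟩ := ih (Nat.ne_of_gt hpos)
    exact ⟨Option α, openExtension α, inferInstance, natCard_opens_openExtension⟩

lemma isLeast_minPoints {k : ℕ} (hk : k ≠ 0) :
    IsLeast {n | ∃ _ : TopologicalSpace (Fin n), Nat.card (Opens (Fin n)) = k} (minPoints k) := by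
  obtain ⟨α, _, _, rfl⟩ := exists_finite_natCard_opens_eq hk
  simp only [minPoints, natCard_subtype_isOpen]
  exact ⟨Nat.sInf_mem ⟨Nat.card α, exists_topologicalSpace_fin_natCard_opens_eq α⟩,
    fun _ hn ↦ Nat.sInf_le hn⟩

lemma minPoints_natCard_opens_le (α : Type*) [TopologicalSpace α] [Finite α] :
    minPoints (Nat.card (Opens α)) ≤ Nat.card α :=
  (isLeast_minPoints Nat.card_pos.ne').2 (exists_topologicalSpace_fin_natCard_opens_eq α)

theorem minPoints_succ_le {k : ℕ} (hk : k ≠ 0) : minPoints (k + 1) ≤ minPoints k + 1 := by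
  obtain ⟨_, hcard⟩ := (isLeast_minPoints hk).1
  let := openExtension (Fin (minPoints k))
  have h := minPoints_natCard_opens_le (Option (Fin (minPoints k)))
  rwa [natCard_opens_openExtension, hcard, Finite.card_option, Nat.card_fin] at h

theorem minPoints_mul_le {a b : ℕ} (ha : a ≠ 0) (hb : b ≠ 0) :
    minPoints (a * b) ≤ minPoints a + minPoints b := by
  obtain ⟨_, hcarda⟩ := (isLeast_minPoints ha).1
  obtain ⟨_, hcardb⟩ := (isLeast_minPoints hb).1
  have h := minPoints_natCard_opens_le (Fin (minPoints a) ⊕ Fin (minPoints b))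
  rwa [natCard_opens_sum, hcarda, hcardb, Nat.card_sum, Nat.card_fin, Nat.card_fin] at h

end MinPoints

/-- For `k ≥ 3`: `m(k) ≤ 1 + m(k-1)`, and `m(k) ≤ m(d) + m(k/d)` for every
divisor `d` of `k` with `1 < d < k`. -/
theorem minPoints_le (k : ℕ) (hk : 3 ≤ k) :
    minPoints k ≤ 1 + minPoints (k - 1) ∧
      ∀ d : ℕ, d ∣ k → 1 < d → d < k → minPoints k ≤ minPoints d + minPoints (k / d) := by
  constructor
  · obtain ⟨j, rfl⟩ := Nat.exists_eq_add_of_le' (show 1 ≤ k by omega)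
    rw [add_comm 1]
    exact minPoints_succ_le (by omega)
  · rintro d ⟨e, rfl⟩ hd -
    rw [Nat.mul_div_cancel_left e (by omega)]
    exact minPoints_mul_le (by omega) (by rintro rfl; simp at hk)
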